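/- Let Σ be a well-posed system on X with K-bounded right-hand side f with respect to a nonempty closed set A ⊆ X. If there exists a finite-step ISS Lyapunov function for Σ with respect to A, then Σ is ISS with respect to A. -/

import Mathlib

noncomputable section

/-- Class `K` comparison functions on `[0,∞)`. -/
def ClassK (γ : ℝ → ℝ) : Prop :=
  ContinuousOn γ (Set.Ici 0) ∧ StrictMonoOn γ (Set.Ici 0) ∧ γ 0 = 0

/-- Class `K∞` comparison functions: class `K` and unbounded. -/
def ClassKinf (γ : ℝ → ℝ) : Prop :=
  ClassK γ ∧ ∀ c : ℝ, ∃ s : ℝ, 0 ≤ s ∧ c < γ s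

/-- Class `KL` comparison functions. -/
def ClassKL (β : ℝ → ℝ → ℝ) : Prop :=
  ContinuousOn (fun p : ℝ × ℝ => β p.1 p.2) (Set.Ici 0 ×ˢ Set.Ici 0) ∧
    (∀ t : ℝ, 0 ≤ t → ClassK fun r => β r t) ∧
    (∀ r : ℝ, 0 < r → StrictAntiOn (β r) (Set.Ici 0) ∧
      Filter.Tendsto (fun t => β r t) Filter.atTop (nhds 0))

section System

variable {E : ℕ → Type*} [∀ i, NormedAddCommGroup (E i)]
variable {P : ℕ → Type*} [∀ i, NormedAddCommGroup (P i)]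

/-- Solution of the discrete-time system `x⁺ = F(x,u)` on `X = ℓ∞(ℕ,(n_i))`. -/
def traj (F : lp E ⊤ → lp P ⊤ → lp E ⊤) (ξ : lp E ⊤) (u : ℕ → lp P ⊤) : ℕ → lp E ⊤
  | 0 => ξ
  | k + 1 => F (traj F ξ u k) (u k)

/-- Admissible external inputs: uniformly bounded sequences in `U`. -/
def AdmInput (u : ℕ → lp P ⊤) : Prop :=
  ∃ C : ℝ, ∀ k, ‖u k‖ ≤ C

/-- `‖u‖_∞ = sup_k |u(k)|_∞`. -/
def inputNorm (u : ℕ → lp P ⊤) : ℝ :=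
  ⨆ k, ‖u k‖

/-- `Σ` is input-to-state stable with respect to the set `A`. -/
def ISS (F : lp E ⊤ → lp P ⊤ → lp E ⊤) (A : Set (lp E ⊤)) : Prop :=
  ∃ β γ : _, ClassKL β ∧ ClassK γ ∧
    ∀ (ξ : lp E ⊤) (u : ℕ → lp P ⊤), AdmInput u →
      ∀ k : ℕ, Metric.infDist (traj F ξ u k) A ≤
        max (β (Metric.infDist ξ A) (k : ℝ)) (γ (inputNorm u))

/-- `Σ` is exponentially input-to-state stable with respect to the set `A`. -/
def eISS (F : lp E ⊤ → lp P ⊤ → lp E ⊤) (A : Set (lp E ⊤)) : Prop :=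
  ∃ C ρ : ℝ, ∃ γ : ℝ → ℝ, 1 ≤ C ∧ 0 ≤ ρ ∧ ρ < 1 ∧ ClassK γ ∧
    ∀ (ξ : lp E ⊤) (u : ℕ → lp P ⊤), AdmInput u →
      ∀ k : ℕ, Metric.infDist (traj F ξ u k) A ≤
        max (C * ρ ^ k * Metric.infDist ξ A) (γ (inputNorm u))

/-- `f` is `K`-bounded with respect to `A`. -/
def KBounded (F : lp E ⊤ → lp P ⊤ → lp E ⊤) (A : Set (lp E ⊤)) : Prop :=
  ∃ κ₁ κ₂ : ℝ → ℝ, ClassK κ₁ ∧ ClassK κ₂ ∧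
    ∀ (ξ : lp E ⊤) (μ : lp P ⊤),
      Metric.infDist (F ξ μ) A ≤ κ₁ (Metric.infDist ξ A) + κ₂ ‖μ‖

/-!
Iterating the decay estimate gives `V (x (M * k)) ≤ max (α^[k] (V ξ)) (γ ‖u‖)`, and since `α` lies
below the identity its iterates decrease pointwise to `0`. Inverting the lower bound of the
sandwich turns this into an ISS estimate for the distance to `A` at the sampling times `M * k`.
Between two sampling times fewer than `M` steps are made, and `K`-boundedness controls these by
class `K` functions of the distance at the last sampling time and of the input. The resulting
estimate decays along a sequence of class `K` functions, and piecewise linear interpolation in time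
makes it a class `KL` function.
-/

open Set Filter Topology

namespace ClassK

variable {φ ψ : ℝ → ℝ}

theorem monotoneOn (hφ : ClassK φ) : MonotoneOn φ (Ici 0) :=
  hφ.2.1.monotoneOn

theorem map_le_map (hφ : ClassK φ) {r s : ℝ} (hr : 0 ≤ r) (hrs : r ≤ s) : φ r ≤ φ s :=
  hφ.monotoneOn hr (hr.trans hrs) hrs

theorem map_nonneg (hφ : ClassK φ) {s : ℝ} (hs : 0 ≤ s) : 0 ≤ φ s :=
  hφ.2.2.ge.trans (hφ.map_le_map le_rfl hs)

theorem map_max (hφ : ClassK φ) {r s : ℝ} (hr : 0 ≤ r) (hs : 0 ≤ s) :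
    φ (max r s) = max (φ r) (φ s) :=
  hφ.monotoneOn.map_max hr hs

theorem mapsTo (hφ : ClassK φ) : MapsTo φ (Ici 0) (Ici 0) :=
  fun _ hs => hφ.map_nonneg hs

protected theorem id : ClassK id :=
  ⟨continuousOn_id, strictMonoOn_id, rfl⟩

theorem comp (hφ : ClassK φ) (hψ : ClassK ψ) : ClassK (φ ∘ ψ) :=
  ⟨hφ.1.comp hψ.1 hψ.mapsTo, hφ.2.1.comp hψ.2.1 hψ.mapsTo,
    (congrArg φ hψ.2.2).trans hφ.2.2⟩

theorem iterate (hφ : ClassK φ) : ∀ n : ℕ, ClassK φ^[n]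
  | 0 => .id
  | n + 1 => (hφ.iterate n).comp hφ

theorem add (hφ : ClassK φ) (hψ : ClassK ψ) : ClassK fun s => φ s + ψ s :=
  ⟨hφ.1.add hψ.1, fun _ hr _ hs hrs => add_lt_add (hφ.2.1 hr hs hrs) (hψ.2.1 hr hs hrs),
    by simp only [hφ.2.2, hψ.2.2, add_zero]⟩

theorem const_mul (hφ : ClassK φ) {c : ℝ} (hc : 0 < c) : ClassK fun s => c * φ s :=
  ⟨continuousOn_const.mul hφ.1,
    fun _ hr _ hs hrs => mul_lt_mul_of_pos_left (hφ.2.1 hr hs hrs) hc,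
    by simp only [hφ.2.2, mul_zero]⟩

protected theorem max (hφ : ClassK φ) (hψ : ClassK ψ) : ClassK fun s => max (φ s) (ψ s) :=
  ⟨hφ.1.sup hψ.1, fun _ hr _ hs hrs => max_lt_max (hφ.2.1 hr hs hrs) (hψ.2.1 hr hs hrs),
    by simp only [hφ.2.2, hψ.2.2, max_self]⟩

theorem tendsto_zero (hφ : ClassK φ) {c : ℕ → ℝ} (hc : ∀ n, 0 ≤ c n)
    (hlim : Tendsto c atTop (𝓝 0)) : Tendsto (fun n => φ (c n)) atTop (𝓝 0) := by
  have h : Tendsto φ (𝓝[≥] 0) (𝓝 (φ 0)) := hφ.1 0 self_mem_Ici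
  rw [hφ.2.2] at h
  exact h.comp (tendsto_nhdsWithin_iff.2 ⟨hlim, .of_forall hc⟩)

theorem map_le_self (hφ : ClassK φ) (hlt : ∀ s, 0 < s → φ s < s) {s : ℝ} (hs : 0 ≤ s) :
    φ s ≤ s := by
  rcases hs.eq_or_lt with rfl | hs
  · exact hφ.2.2.le
  · exact (hlt s hs).le

theorem antitone_iterate (hφ : ClassK φ) (hlt : ∀ s, 0 < s → φ s < s) {s : ℝ} (hs : 0 ≤ s) :
    Antitone fun n : ℕ => φ^[n] s :=
  antitone_nat_of_succ_le fun n => by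
    rw [Function.iterate_succ_apply']
    exact hφ.map_le_self hlt ((hφ.iterate n).map_nonneg hs)

theorem tendsto_iterate_zero (hφ : ClassK φ) (hlt : ∀ s, 0 < s → φ s < s) {s : ℝ}
    (hs : 0 ≤ s) : Tendsto (fun n : ℕ => φ^[n] s) atTop (𝓝 0) := by
  have hnonneg (n : ℕ) : 0 ≤ φ^[n] s := (hφ.iterate n).map_nonneg hs
  have hlim := tendsto_atTop_ciInf (hφ.antitone_iterate hlt hs) ⟨0, forall_mem_range.2 hnonneg⟩
  rcases (le_ciInf hnonneg).eq_or_lt with hzero | hpos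
  · rwa [← hzero] at hlim
  · have hfix := isFixedPt_of_tendsto_iterate hlim (hφ.1.continuousAt (Ici_mem_nhds hpos))
    exact absurd hfix (hlt _ hpos).ne

theorem of_orderIso (e : ℝ ≃o ℝ) (he : e 0 = 0) : ClassK e :=
  ⟨e.continuous.continuousOn, e.strictMono.strictMonoOn _, he⟩

end ClassK

namespace ClassKinf

variable {ω : ℝ → ℝ}

theorem surjOn (hω : ClassKinf ω) : SurjOn ω (Ici 0) (Ici 0) := by
  intro y hy
  obtain ⟨s, hs, hys⟩ := hω.2 y
  have hmem : y ∈ Icc (ω 0) (ω s) := ⟨hω.1.2.2.trans_le hy, hys.le⟩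
  exact image_mono Icc_subset_Ici_self
    (intermediate_value_Icc hs (hω.1.1.mono Icc_subset_Ici_self) hmem)

theorem exists_orderIso_eqOn (hω : ClassKinf ω) : ∃ e : ℝ ≃o ℝ, EqOn e ω (Ici 0) := by
  let g : ℝ → ℝ := fun s => ω (max s 0) + min s 0
  have hg_nonneg {s : ℝ} (hs : 0 ≤ s) : g s = ω s := by
    simp only [g, max_eq_left hs, min_eq_right hs, add_zero]
  have hg_nonpos {s : ℝ} (hs : s ≤ 0) : g s = s := by
    simp only [g, max_eq_right hs, min_eq_left hs, hω.1.2.2, zero_add]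
  have hmono : StrictMono g := by
    have hpos : StrictMonoOn g (Ici 0) := hω.1.2.1.congr fun s hs => (hg_nonneg hs).symm
    have hneg : StrictMonoOn g (Iic 0) := strictMonoOn_id.congr fun s hs => (hg_nonpos hs).symm
    exact hneg.Iic_union_Ici hpos
  have hsurj : Function.Surjective g := by
    intro y
    rcases le_total 0 y with hy | hy
    · obtain ⟨s, hs, rfl⟩ := hω.surjOn hy
      exact ⟨s, hg_nonneg hs⟩
    · exact ⟨y, hg_nonpos hy⟩
  exact ⟨hmono.orderIsoOfSurjective g hsurj, fun s hs => hg_nonneg hs⟩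

theorem exists_classK_leftInvOn (hω : ClassKinf ω) :
    ∃ η : ℝ → ℝ, ClassK η ∧ LeftInvOn η ω (Ici 0) := by
  obtain ⟨e, he⟩ := hω.exists_orderIso_eqOn
  have hsymm (s : ℝ) (hs : 0 ≤ s) : e.symm (ω s) = s := by rw [← he hs, e.symm_apply_apply]
  have hzero : e.symm 0 = 0 := by simpa only [hω.1.2.2] using hsymm 0 le_rfl
  exact ⟨e.symm, .of_orderIso e.symm hzero, hsymm⟩

end ClassKinf

/-- Piecewise linear interpolation of a sequence `c`, taking the value `c n` at `n`. It is only
meant for arguments `t ≥ 0`; for `t < 0` the first linear piece is extended. -/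
def linearInterp (c : ℕ → ℝ) (t : ℝ) : ℝ :=
  AffineMap.lineMap (c ⌊t⌋₊) (c (⌊t⌋₊ + 1)) (t - ⌊t⌋₊)

section LinearInterp

variable {c d : ℕ → ℝ} {t : ℝ}

theorem linearInterp_natCast (c : ℕ → ℝ) (n : ℕ) : linearInterp c n = c n := by
  simp only [linearInterp, Nat.floor_natCast, sub_self, AffineMap.lineMap_apply_zero]

theorem linearInterp_zero (t : ℝ) : linearInterp 0 t = 0 :=
  AffineMap.lineMap_same_apply 0 _

theorem linearInterp_eq_lineMap (c : ℕ → ℝ) {n : ℕ} (ht : t ∈ Icc (n : ℝ) (n + 1)) :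
    linearInterp c t = AffineMap.lineMap (c n) (c (n + 1)) (t - n) := by
  rcases ht.2.eq_or_lt with rfl | hlt
  · rw [add_sub_cancel_left, AffineMap.lineMap_apply_one, ← Nat.cast_succ, linearInterp_natCast]
  · have hfloor : ⌊t⌋₊ = n := (Nat.floor_eq_iff (n.cast_nonneg.trans ht.1)).2 ⟨ht.1, hlt⟩
    rw [linearInterp, hfloor]

theorem continuousOn_uncurry_linearInterp :
    ContinuousOn (Function.uncurry linearInterp) (univ ×ˢ Ici 0) := by
  let S (n : ℕ) : Set ((ℕ → ℝ) × ℝ) := Prod.snd ⁻¹' Icc (n : ℝ) (n + 1)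
  have hfin : LocallyFinite S := by
    have hInt : LocallyFinite fun n : ℤ => Icc (n : ℝ) (n + 1) :=
      locallyFinite_Icc_of_tendsto tendsto_intCast_atTop_atTop
        (tendsto_atBot_add_const_right _ _ (tendsto_intCast_atBot_iff.2 tendsto_id))
    exact (hInt.comp_injective Nat.cast_injective).preimage_continuous continuous_snd
  have hcont (n : ℕ) : ContinuousOn (Function.uncurry linearInterp) (S n) := by
    have hline : Continuous fun p : (ℕ → ℝ) × ℝ =>
        AffineMap.lineMap (p.1 n) (p.1 (n + 1)) (p.2 - n) := by fun_prop
    exact hline.continuousOn.congr fun p hp => linearInterp_eq_lineMap p.1 hp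
  refine (hfin.continuousOn_iUnion (fun n => isClosed_Icc.preimage continuous_snd) hcont).mono ?_
  exact fun p hp => mem_iUnion.2 ⟨⌊p.2⌋₊, Nat.floor_le hp.2, (Nat.lt_floor_add_one _).le⟩

theorem continuousOn_linearInterp {X : Type*} [TopologicalSpace X] {f : X → ℕ → ℝ} {g : X → ℝ}
    {s : Set X} (hf : ∀ n, ContinuousOn (fun x => f x n) s) (hg : ContinuousOn g s)
    (hmaps : MapsTo g s (Ici 0)) : ContinuousOn (fun x => linearInterp (f x) (g x)) s :=
  continuousOn_uncurry_linearInterp.comp (f := fun x => (f x, g x))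
    ((continuousOn_pi.2 hf).prodMk hg) fun _ hx => ⟨mem_univ _, hmaps hx⟩

theorem linearInterp_lt_linearInterp (hcd : ∀ n, c n < d n) (ht : 0 ≤ t) :
    linearInterp c t < linearInterp d t :=
  lineMap_strict_mono_endpoints (hcd _) (hcd _) (sub_nonneg.2 (Nat.floor_le ht))
    (sub_le_iff_le_add'.2 (Nat.lt_floor_add_one t).le)

theorem linearInterp_le (hc : StrictAnti c) (ht : 0 ≤ t) :
    linearInterp c t ≤ c ⌊t⌋₊ := by
  have hstep := (hc ⌊t⌋₊.lt_succ_self).le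
  exact (lineMap_mono_right hstep (sub_nonneg.2 (Nat.floor_le ht))).trans_eq
    (AffineMap.lineMap_same_apply _ _)

theorem lt_linearInterp (hc : StrictAnti c) (t : ℝ) :
    c (⌊t⌋₊ + 1) < linearInterp c t :=
  (right_lt_lineMap_iff_lt (sub_lt_iff_lt_add'.2 (Nat.lt_floor_add_one t))).2
    (hc ⌊t⌋₊.lt_succ_self)

theorem strictAntiOn_linearInterp (hc : StrictAnti c) :
    StrictAntiOn (linearInterp c) (Ici 0) := by
  intro s _ t ht hst
  rcases (Nat.floor_mono hst.le).eq_or_lt with hfloor | hfloor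
  · have hstep : c (⌊s⌋₊ + 1) - c ⌊s⌋₊ < 0 := sub_neg.2 (hc ⌊s⌋₊.lt_succ_self)
    simp only [linearInterp, ← hfloor, AffineMap.lineMap_apply_ring']
    gcongr ?_ + _
    exact mul_lt_mul_of_neg_right (sub_lt_sub_right hst _) hstep
  · calc linearInterp c t ≤ c ⌊t⌋₊ := linearInterp_le hc ht
      _ ≤ c (⌊s⌋₊ + 1) := hc.antitone hfloor
      _ < linearInterp c s := lt_linearInterp hc s

theorem tendsto_linearInterp (hc : StrictAnti c) {l : ℝ}
    (hlim : Tendsto c atTop (𝓝 l)) : Tendsto (linearInterp c) atTop (𝓝 l) := by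
  have hfloor : Tendsto (fun t : ℝ => ⌊t⌋₊) atTop atTop := tendsto_nat_floor_atTop
  refine tendsto_of_tendsto_of_tendsto_of_le_of_le'
    (((tendsto_add_atTop_iff_nat 1).2 hlim).comp hfloor) (hlim.comp hfloor)
    (.of_forall fun t => (lt_linearInterp hc t).le) ?_
  filter_upwards [eventually_ge_atTop 0] with t ht using linearInterp_le hc ht

end LinearInterp

theorem classKL_linearInterp {b : ℕ → ℝ → ℝ} (hb : ∀ n, ClassK (b n))
    (hanti : ∀ r, 0 < r → StrictAnti fun n => b n r)
    (hlim : ∀ r, 0 < r → Tendsto (fun n => b n r) atTop (𝓝 0)) :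
    ClassKL fun r t => linearInterp (fun n => b n r) t := by
  have hcont : ContinuousOn (fun p : ℝ × ℝ => linearInterp (fun n => b n p.1) p.2)
      (Ici 0 ×ˢ Ici 0) :=
    continuousOn_linearInterp (fun n => (hb n).1.comp continuousOn_fst fun _ hp => hp.1)
      continuousOn_snd fun _ hp => hp.2
  refine ⟨hcont, fun t ht => ⟨?_, ?_, ?_⟩, fun r hr =>
    ⟨strictAntiOn_linearInterp (hanti r hr), tendsto_linearInterp (hanti r hr) (hlim r hr)⟩⟩
  · exact continuousOn_linearInterp (fun n => (hb n).1) continuousOn_const fun _ _ => ht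
  · exact fun _ hr _ hs hrs =>
      linearInterp_lt_linearInterp (fun n => (hb n).2.1 hr hs hrs) ht
  · have hzero : (fun n => b n 0) = 0 := funext fun n => (hb n).2.2
    simp only [hzero, linearInterp_zero]

/-- Discrete-time counterpart of a class `KL` function: a sequence of class `K` functions that
decreases pointwise to `0`. The decrease in `n` is not required to be strict. -/
structure ClassKLSeq (b : ℕ → ℝ → ℝ) : Prop where
  classK : ∀ n, ClassK (b n)
  antitone : ∀ r, 0 ≤ r → Antitone fun n => b n r
  tendsto_zero : ∀ r, 0 ≤ r → Tendsto (fun n => b n r) atTop (𝓝 0)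

theorem ClassK.classKLSeq_iterate {φ : ℝ → ℝ} (hφ : ClassK φ) (hlt : ∀ s, 0 < s → φ s < s) :
    ClassKLSeq fun n => φ^[n] where
  classK := hφ.iterate
  antitone _ hr := hφ.antitone_iterate hlt hr
  tendsto_zero _ hr := hφ.tendsto_iterate_zero hlt hr

namespace ClassKLSeq

variable {b : ℕ → ℝ → ℝ}

theorem comp_left (hb : ClassKLSeq b) {φ : ℝ → ℝ} (hφ : ClassK φ) :
    ClassKLSeq fun n => φ ∘ b n where
  classK n := hφ.comp (hb.classK n)
  antitone r hr _ _ hmn := hφ.map_le_map ((hb.classK _).map_nonneg hr) (hb.antitone r hr hmn)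
  tendsto_zero r hr :=
    hφ.tendsto_zero (fun n => (hb.classK n).map_nonneg hr) (hb.tendsto_zero r hr)

theorem comp_right (hb : ClassKLSeq b) {φ : ℝ → ℝ} (hφ : ClassK φ) :
    ClassKLSeq fun n => b n ∘ φ where
  classK n := (hb.classK n).comp hφ
  antitone r hr := hb.antitone (φ r) (hφ.map_nonneg hr)
  tendsto_zero r hr := hb.tendsto_zero (φ r) (hφ.map_nonneg hr)

theorem comp_div (hb : ClassKLSeq b) {M : ℕ} (hM : 0 < M) : ClassKLSeq fun n => b (n / M) where
  classK n := hb.classK (n / M)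
  antitone r hr _ _ hmn := hb.antitone r hr (Nat.div_le_div_right hmn)
  tendsto_zero r hr := (hb.tendsto_zero r hr).comp (Nat.tendsto_div_const_atTop hM.ne')

theorem exists_classKL_ge (hb : ClassKLSeq b) :
    ∃ β : ℝ → ℝ → ℝ, ClassKL β ∧ ∀ (n : ℕ) (r : ℝ), 0 ≤ r → b n r ≤ β r n := by
  -- The summand `r / (n + 1)` makes the decrease in `n` strict.
  let b' : ℕ → ℝ → ℝ := fun n r => b n r + 1 / ((n : ℝ) + 1) * r
  have hK (n : ℕ) : ClassK (b' n) :=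
    (hb.classK n).add (ClassK.id.const_mul Nat.one_div_pos_of_nat)
  have hanti (r : ℝ) (hr : 0 < r) : StrictAnti fun n => b' n r :=
    (hb.antitone r hr.le).add_strictAnti fun _ _ hmn =>
      mul_lt_mul_of_pos_right (Nat.one_div_lt_one_div hmn) hr
  have hlim (r : ℝ) (hr : 0 < r) : Tendsto (fun n => b' n r) atTop (𝓝 0) := by
    simpa only [zero_mul, add_zero] using (hb.tendsto_zero r hr.le).add
      ((tendsto_one_div_add_atTop_nhds_zero_nat (𝕜 := ℝ)).mul_const r)
  refine ⟨_, classKL_linearInterp hK hanti hlim, fun n r hr => ?_⟩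
  rw [linearInterp_natCast]
  exact le_add_of_nonneg_right (mul_nonneg Nat.one_div_pos_of_nat.le hr)

end ClassKLSeq

section Trajectories

variable {F : lp E ⊤ → lp P ⊤ → lp E ⊤} {A : Set (lp E ⊤)} {u : ℕ → lp P ⊤}

theorem traj_add (F : lp E ⊤ → lp P ⊤ → lp E ⊤) (ξ : lp E ⊤) (u : ℕ → lp P ⊤) (m n : ℕ) :
    traj F ξ u (m + n) = traj F (traj F ξ u m) (fun i => u (m + i)) n := by
  induction n with
  | zero => rfl
  | succ n ih => rw [← add_assoc, traj, traj, ih]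

theorem inputNorm_nonneg (u : ℕ → lp P ⊤) : 0 ≤ inputNorm u :=
  Real.iSup_nonneg fun _ => norm_nonneg _

namespace AdmInput

theorem norm_le_inputNorm (hu : AdmInput u) (k : ℕ) : ‖u k‖ ≤ inputNorm u :=
  le_ciSup (hu.imp fun _ hC => forall_mem_range.2 hC) k

theorem shift (hu : AdmInput u) (m : ℕ) : AdmInput fun i => u (m + i) :=
  hu.imp fun _ hC i => hC (m + i)

theorem inputNorm_shift_le (hu : AdmInput u) (m : ℕ) :
    inputNorm (fun i => u (m + i)) ≤ inputNorm u :=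
  ciSup_le fun i => hu.norm_le_inputNorm (m + i)

theorem map_inputNorm_shift_le (hu : AdmInput u) {φ : ℝ → ℝ} (hφ : ClassK φ) (m : ℕ) :
    φ (inputNorm fun i => u (m + i)) ≤ φ (inputNorm u) :=
  hφ.map_le_map (inputNorm_nonneg _) (hu.inputNorm_shift_le m)

end AdmInput

theorem ISS.of_classKLSeq {b : ℕ → ℝ → ℝ} {γ : ℝ → ℝ} (hb : ClassKLSeq b) (hγ : ClassK γ)
    (h : ∀ (ξ : lp E ⊤) (u : ℕ → lp P ⊤), AdmInput u → ∀ n : ℕ,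
      Metric.infDist (traj F ξ u n) A ≤
        max (b n (Metric.infDist ξ A)) (γ (inputNorm u))) :
    ISS F A := by
  obtain ⟨β, hβ, hle⟩ := hb.exists_classKL_ge
  exact ⟨β, γ, hβ, hγ, fun ξ u hu n =>
    (h ξ u hu n).trans (max_le_max_right _ (hle n _ Metric.infDist_nonneg))⟩

namespace KBounded

theorem exists_infDist_le_max (hF : KBounded F A) :
    ∃ κ₁ κ₂ : ℝ → ℝ, ClassK κ₁ ∧ ClassK κ₂ ∧ ∀ (ξ : lp E ⊤) (μ : lp P ⊤),
      Metric.infDist (F ξ μ) A ≤ max (κ₁ (Metric.infDist ξ A)) (κ₂ ‖μ‖) := by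
  obtain ⟨κ₁, κ₂, hκ₁, hκ₂, hle⟩ := hF
  refine ⟨_, _, hκ₁.const_mul two_pos, hκ₂.const_mul two_pos, fun ξ μ => (hle ξ μ).trans ?_⟩
  rw [← mul_max_of_nonneg _ _ zero_le_two, two_mul]
  exact add_le_add (le_max_left _ _) (le_max_right _ _)

theorem exists_infDist_traj_le_max (hF : KBounded F A) (N : ℕ) :
    ∃ φ ψ : ℝ → ℝ, ClassK φ ∧ ClassK ψ ∧ ∀ (ξ : lp E ⊤) (u : ℕ → lp P ⊤), AdmInput u →
      ∀ n ≤ N, Metric.infDist (traj F ξ u n) A ≤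
        max (φ (Metric.infDist ξ A)) (ψ (inputNorm u)) := by
  obtain ⟨κ₁, κ₂, hκ₁, hκ₂, hstep⟩ := hF.exists_infDist_le_max
  induction N with
  | zero =>
    refine ⟨id, id, .id, .id, fun ξ u _ n hn => ?_⟩
    rw [Nat.le_zero.1 hn]
    exact le_max_left _ _
  | succ N ih =>
    obtain ⟨φ, ψ, hφ, hψ, hN⟩ := ih
    refine ⟨_, _, hφ.max (hκ₁.comp hφ), hψ.max ((hκ₁.comp hψ).max hκ₂), fun ξ u hu n hn => ?_⟩
    have hφ₀ : 0 ≤ φ (Metric.infDist ξ A) := hφ.map_nonneg Metric.infDist_nonneg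
    have hψ₀ : 0 ≤ ψ (inputNorm u) := hψ.map_nonneg (inputNorm_nonneg u)
    rcases hn.lt_or_eq with hlt | rfl
    · exact (hN ξ u hu n (Nat.lt_succ_iff.1 hlt)).trans
        (max_le_max (le_max_left _ _) (le_max_left _ _))
    · have hstate := hκ₁.map_le_map Metric.infDist_nonneg (hN ξ u hu N le_rfl)
      rw [hκ₁.map_max hφ₀ hψ₀] at hstate
      have hinput := hκ₂.map_le_map (norm_nonneg _) (hu.norm_le_inputNorm N)
      refine (hstep (traj F ξ u N) (u N)).trans ((max_le_max hstate hinput).trans ?_)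
      rw [max_assoc]
      exact max_le_max (le_max_right _ _) (le_max_right _ _)

theorem iss_of_infDist_traj_mul_le (hF : KBounded F A) {M : ℕ} (hM : 0 < M) {b : ℕ → ℝ → ℝ}
    {γ : ℝ → ℝ} (hb : ClassKLSeq b) (hγ : ClassK γ)
    (h : ∀ (ξ : lp E ⊤) (u : ℕ → lp P ⊤), AdmInput u → ∀ k : ℕ,
      Metric.infDist (traj F ξ u (M * k)) A ≤
        max (b k (Metric.infDist ξ A)) (γ (inputNorm u))) :
    ISS F A := by
  obtain ⟨φ, ψ, hφ, hψ, hshort⟩ := hF.exists_infDist_traj_le_max M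
  refine .of_classKLSeq ((hb.comp_left hφ).comp_div hM) ((hφ.comp hγ).max hψ) fun ξ u hu n => ?_
  set k := n / M
  set x := traj F ξ u (M * k)
  have hbk : 0 ≤ b k (Metric.infDist ξ A) := (hb.classK k).map_nonneg Metric.infDist_nonneg
  have hγu : 0 ≤ γ (inputNorm u) := hγ.map_nonneg (inputNorm_nonneg u)
  calc Metric.infDist (traj F ξ u n) A
      = Metric.infDist (traj F x (fun i => u (M * k + i)) (n % M)) A := by
        rw [← traj_add, Nat.div_add_mod]
    _ ≤ max (φ (Metric.infDist x A)) (ψ (inputNorm fun i => u (M * k + i))) :=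
        hshort x _ (hu.shift _) _ (Nat.mod_lt n hM).le
    _ ≤ max (φ (max (b k (Metric.infDist ξ A)) (γ (inputNorm u)))) (ψ (inputNorm u)) :=
        max_le_max (hφ.map_le_map Metric.infDist_nonneg (h ξ u hu k))
          (hu.map_inputNorm_shift_le hψ _)
    _ = max (φ (b k (Metric.infDist ξ A))) (max (φ (γ (inputNorm u))) (ψ (inputNorm u))) := by
        rw [hφ.map_max hbk hγu, max_assoc]

end KBounded

theorem map_traj_mul_le_max {V : lp E ⊤ → ℝ} (hV : ∀ ξ, 0 ≤ V ξ) {M : ℕ} {α γ : ℝ → ℝ}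
    (hα : ClassK α) (hlt : ∀ s, 0 < s → α s < s) (hγ : ClassK γ)
    (hdecay : ∀ (ξ : lp E ⊤) (u : ℕ → lp P ⊤), AdmInput u →
      V (traj F ξ u M) ≤ max (α (V ξ)) (γ (inputNorm u)))
    (ξ : lp E ⊤) (hu : AdmInput u) (k : ℕ) :
    V (traj F ξ u (M * k)) ≤ max (α^[k] (V ξ)) (γ (inputNorm u)) := by
  induction k with
  | zero => exact le_max_left _ _
  | succ k ih =>
    set x := traj F ξ u (M * k)
    have hγu : 0 ≤ γ (inputNorm u) := hγ.map_nonneg (inputNorm_nonneg u)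
    calc V (traj F ξ u (M * (k + 1)))
        = V (traj F x (fun i => u (M * k + i)) M) := by rw [Nat.mul_succ, traj_add]
      _ ≤ max (α (V x)) (γ (inputNorm fun i => u (M * k + i))) := hdecay x _ (hu.shift _)
      _ ≤ max (α (max (α^[k] (V ξ)) (γ (inputNorm u)))) (γ (inputNorm u)) :=
          max_le_max (hα.map_le_map (hV x) ih) (hu.map_inputNorm_shift_le hγ _)
      _ = max (α^[k + 1] (V ξ)) (γ (inputNorm u)) := by
          rw [hα.map_max ((hα.iterate k).map_nonneg (hV ξ)) hγu, max_assoc,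
            max_eq_right (hα.map_le_self hlt hγu), Function.iterate_succ_apply']

end Trajectories

theorem stmt8_general
    (F : lp E ⊤ → lp P ⊤ → lp E ⊤)
    (A : Set (lp E ⊤)) (_hAne : A.Nonempty)
    (hKb : KBounded F A)
    (V : lp E ⊤ → ℝ)
    (M : ℕ) (hM : 0 < M)
    (ωl ωu α : ℝ → ℝ) (hωl : ClassKinf ωl) (hωu : ClassK ωu)
    (hα : ClassK α) (hαid : ∀ s : ℝ, 0 < s → α s < s)
    (γ : ℝ → ℝ) (hγ : ClassK γ)
    (hsandwich : ∀ ξ : lp E ⊤,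
      ωl (Metric.infDist ξ A) ≤ V ξ ∧ V ξ ≤ ωu (Metric.infDist ξ A))
    (hdecay : ∀ (ξ : lp E ⊤) (u : ℕ → lp P ⊤), AdmInput u →
      V (traj F ξ u M) ≤ max (α (V ξ)) (γ (inputNorm u))) :
    ISS F A := by
  obtain ⟨η, hη, hηω⟩ := hωl.exists_classK_leftInvOn
  have hVnonneg (ξ : lp E ⊤) : 0 ≤ V ξ :=
    (hωl.1.map_nonneg Metric.infDist_nonneg).trans (hsandwich ξ).1
  refine hKb.iss_of_infDist_traj_mul_le hM
    (((hα.classKLSeq_iterate hαid).comp_left hη).comp_right hωu) (hη.comp hγ)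
    fun ξ u hu k => ?_
  have hαk : ClassK α^[k] := hα.iterate k
  calc Metric.infDist (traj F ξ u (M * k)) A
      = η (ωl (Metric.infDist (traj F ξ u (M * k)) A)) := (hηω Metric.infDist_nonneg).symm
    _ ≤ η (V (traj F ξ u (M * k))) :=
        hη.map_le_map (hωl.1.map_nonneg Metric.infDist_nonneg) (hsandwich _).1
    _ ≤ η (max (α^[k] (V ξ)) (γ (inputNorm u))) :=
        hη.map_le_map (hVnonneg _) (map_traj_mul_le_max hVnonneg hα hαid hγ hdecay ξ hu k)
    _ = max (η (α^[k] (V ξ))) (η (γ (inputNorm u))) :=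
        hη.map_max (hαk.map_nonneg (hVnonneg ξ)) (hγ.map_nonneg (inputNorm_nonneg u))
    _ ≤ max (η (α^[k] (ωu (Metric.infDist ξ A)))) (η (γ (inputNorm u))) :=
        max_le_max_right _ (hη.map_le_map (hαk.map_nonneg (hVnonneg ξ))
          (hαk.map_le_map (hVnonneg ξ) (hsandwich ξ).2))

/-- Existence of a finite-step ISS Lyapunov function implies ISS. -/
theorem stmt8
    [∀ i, NormedSpace ℝ (E i)] [∀ i, FiniteDimensional ℝ (E i)] [∀ i, Nontrivial (E i)]
    [∀ i, NormedSpace ℝ (P i)] [∀ i, FiniteDimensional ℝ (P i)] [∀ i, Nontrivial (P i)]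
    (F : lp E ⊤ → lp P ⊤ → lp E ⊤)
    (A : Set (lp E ⊤)) (hAne : A.Nonempty) (hAcl : IsClosed A)
    (hKb : KBounded F A)
    (V : lp E ⊤ → ℝ) (hVcont : Continuous V) (hVnonneg : ∀ ξ, 0 ≤ V ξ)
    (M : ℕ) (hM : 0 < M)
    (ωl ωu α : ℝ → ℝ) (hωl : ClassKinf ωl) (hωu : ClassKinf ωu)
    (hα : ClassKinf α) (hαid : ∀ s : ℝ, 0 < s → α s < s)
    (γ : ℝ → ℝ) (hγ : ClassK γ)
    (hsandwich : ∀ ξ : lp E ⊤,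
      ωl (Metric.infDist ξ A) ≤ V ξ ∧ V ξ ≤ ωu (Metric.infDist ξ A))
    (hdecay : ∀ (ξ : lp E ⊤) (u : ℕ → lp P ⊤), AdmInput u →
      V (traj F ξ u M) ≤ max (α (V ξ)) (γ (inputNorm u))) :
    ISS F A :=
  stmt8_general F A hAne hKb V M hM ωl ωu α hωl hωu.1 hα.1 hαid γ hγ hsandwich hdecay

end System
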